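/- For any p̂ ∈ Ω, losses L₁, L₂ and k further losses L₃, …, L_{2+k} (with the relevant Bayes updates well defined), swapping the first two losses and then applying the remaining k updates satisfies D(p̂[L₁, L₂, L₃, …, L_{2+k}], p̂[L₂, L₁, L₃, …, L_{2+k}]) ≤ 2ε · C^k · (C² − 1)/(C − 1). -/

import Mathlib

open MeasureTheory

/-- The exact Bayes update of a Borel measure `p` on `ℝ^d` by a loss `L`:
the measure with density `x ↦ e^{-L x} / ∫ e^{-L x'} dp(x')` with respect to `p`
(defined when `∫ e^{-L} dp > 0`). -/
noncomputable def bayesUpdate {d : ℕ} (p : Measure (EuclideanSpace ℝ (Fin d)))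
    (L : EuclideanSpace ℝ (Fin d) → ℝ) : Measure (EuclideanSpace ℝ (Fin d)) :=
  p.withDensity fun x =>
    ENNReal.ofReal (Real.exp (-(L x)) / ∫ x', Real.exp (-(L x')) ∂p)

/-!
Bayes updates compose by adding losses, `B(B(p, L), L') = B(p, L + L')`, so the exact posterior of a
list of losses does not depend on their order. By (7) the particle filter stays within
`ε (1 + C + ⋯ + C ^ (T - 1))` of the exact posterior after `T` updates, so two orderings of the same
`T` losses end up at most twice that far apart, and by (6) each further update multiplies the gap by
at most `C`.
-/

section Fold

variable {X ι : Type*} {D : X → X → ℝ} {s : Set X} {U V : X → ι → X} {C ε : ℝ} {l : List ι}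

theorem discrepancy_foldl_le_of_le_mul_add (hC : 0 ≤ C)
    (hU : ∀ a ∈ l, ∀ x ∈ s, U x a ∈ s) (hV : ∀ a ∈ l, ∀ y ∈ s, V y a ∈ s)
    (hUV : ∀ a ∈ l, ∀ x ∈ s, ∀ y ∈ s, D (U x a) (V y a) ≤ C * D x y + ε)
    {x y : X} (hx : x ∈ s) (hy : y ∈ s) :
    D (l.foldl U x) (l.foldl V y) ≤
      C ^ l.length * D x y + ε * ∑ i ∈ Finset.range l.length, C ^ i := by
  induction l generalizing x y with
  | nil => simp
  | cons a l ih =>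
    simp only [List.forall_mem_cons] at hU hV hUV
    calc D (l.foldl U (U x a)) (l.foldl V (V y a))
        ≤ C ^ l.length * D (U x a) (V y a) + ε * ∑ i ∈ Finset.range l.length, C ^ i :=
          ih hU.2 hV.2 hUV.2 (hU.1 x hx) (hV.1 y hy)
      _ ≤ C ^ l.length * (C * D x y + ε) + ε * ∑ i ∈ Finset.range l.length, C ^ i := by
          gcongr
          exact hUV.1 x hx y hy
      _ = C ^ (l.length + 1) * D x y + ε * ∑ i ∈ Finset.range (l.length + 1), C ^ i := by
          rw [Finset.sum_range_succ]
          ring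

theorem discrepancy_foldl_le_of_le_mul (hC : 0 ≤ C) (hU : ∀ a ∈ l, ∀ x ∈ s, U x a ∈ s)
    (hUU : ∀ a ∈ l, ∀ x ∈ s, ∀ y ∈ s, D (U x a) (U y a) ≤ C * D x y)
    {x y : X} (hx : x ∈ s) (hy : y ∈ s) :
    D (l.foldl U x) (l.foldl U y) ≤ C ^ l.length * D x y := by
  simpa using discrepancy_foldl_le_of_le_mul_add (ε := 0) hC hU hU (by simpa using hUU) hx hy

end Fold

section Bayes

variable {α : Type*} [MeasurableSpace α]

/-- A loss function: a nonnegative measurable real-valued function. -/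
structure IsLoss (L : α → ℝ) : Prop where
  measurable : Measurable L
  nonneg : ∀ x, 0 ≤ L x

theorem IsLoss.integrable_exp_neg {L : α → ℝ} (hL : IsLoss L) (p : Measure α)
    [IsFiniteMeasure p] : Integrable (fun x => Real.exp ((-L) x)) p :=
  .of_bound (C := 1) hL.measurable.neg.exp.aestronglyMeasurable <| .of_forall fun x => by
    simpa using hL.nonneg x

theorem IsLoss.isProbabilityMeasure_tilted_neg {L : α → ℝ} (hL : IsLoss L) (p : Measure α)
    [IsFiniteMeasure p] [NeZero p] : IsProbabilityMeasure (p.tilted (-L)) :=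
  isProbabilityMeasure_tilted (hL.integrable_exp_neg p)

theorem foldl_tilted_neg {l : List (α → ℝ)} (hl : ∀ L ∈ l, IsLoss L) (p : Measure α)
    [IsProbabilityMeasure p] :
    l.foldl (fun q L => q.tilted (-L)) p = p.tilted (-l.sum) := by
  induction l generalizing p with
  | nil => simp
  | cons L l ih =>
    rw [List.forall_mem_cons] at hl
    have := hl.1.isProbabilityMeasure_tilted_neg p
    rw [List.foldl_cons, ih hl.2, tilted_tilted (hl.1.integrable_exp_neg p), List.sum_cons, neg_add]

theorem bayesUpdate_eq_tilted {d : ℕ} (p : Measure (EuclideanSpace ℝ (Fin d)))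
    (L : EuclideanSpace ℝ (Fin d) → ℝ) : bayesUpdate p L = p.tilted (-L) :=
  rfl

end Bayes

section ParticleFilter

/-- A discrepancy measure on the probability measures on `α`, with the axioms of a
`PseudoMetricSpace`. It is encoded as a function of arbitrary measures, constrained only on
probability measures. -/
structure IsDiscrepancy {α : Type*} [MeasurableSpace α] (D : Measure α → Measure α → ℝ) :
    Prop where
  self : ∀ p, IsProbabilityMeasure p → D p p = 0
  symm : ∀ p q, IsProbabilityMeasure p → IsProbabilityMeasure q → D p q = D q p
  triangle : ∀ p q r, IsProbabilityMeasure p → IsProbabilityMeasure q →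
    IsProbabilityMeasure r → D p q ≤ D p r + D r q

variable {α : Type*} [MeasurableSpace α] {D : Measure α → Measure α → ℝ}
  {U : Measure α → (α → ℝ) → Measure α} {C ε : ℝ} {p : Measure α} {l l₁ l₂ : List (α → ℝ)}

theorem isProbabilityMeasure_foldl
    (hU : ∀ q L, IsProbabilityMeasure q → IsLoss L → IsProbabilityMeasure (U q L))
    (hl : ∀ L ∈ l, IsLoss L) (hp : IsProbabilityMeasure p) :
    IsProbabilityMeasure (l.foldl U p) :=
  List.foldlRecOn l U hp fun q hq L hL => hU q L hq (hl L hL)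

theorem discrepancy_foldl_tilted_neg_le (hD_self : ∀ q, IsProbabilityMeasure q → D q q = 0)
    (hU : ∀ q L, IsProbabilityMeasure q → IsLoss L → IsProbabilityMeasure (U q L))
    (hC : 0 ≤ C)
    (hUB : ∀ q r L, IsProbabilityMeasure q → IsProbabilityMeasure r → IsLoss L →
      D (U q L) (r.tilted (-L)) ≤ C * D q r + ε)
    (hp : IsProbabilityMeasure p) (hl : ∀ L ∈ l, IsLoss L) :
    D (l.foldl U p) (p.tilted (-l.sum)) ≤ ε * ∑ i ∈ Finset.range l.length, C ^ i := by
  have h := discrepancy_foldl_le_of_le_mul_add (s := {q | IsProbabilityMeasure q}) hC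
    (fun L hL q hq => hU q L hq (hl L hL))
    (fun L hL q (_ : IsProbabilityMeasure q) => (hl L hL).isProbabilityMeasure_tilted_neg q)
    (fun L hL q hq r hr => hUB q r L hq hr (hl L hL)) hp hp
  rwa [foldl_tilted_neg hl, hD_self p hp, mul_zero, zero_add] at h

theorem discrepancy_foldl_perm_le (hD : IsDiscrepancy D)
    (hU : ∀ q L, IsProbabilityMeasure q → IsLoss L → IsProbabilityMeasure (U q L))
    (hC : 0 ≤ C)
    (hUB : ∀ q r L, IsProbabilityMeasure q → IsProbabilityMeasure r → IsLoss L →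
      D (U q L) (r.tilted (-L)) ≤ C * D q r + ε)
    (hp : IsProbabilityMeasure p) (hperm : l₁.Perm l₂) (hl₁ : ∀ L ∈ l₁, IsLoss L) :
    D (l₁.foldl U p) (l₂.foldl U p) ≤ 2 * ε * ∑ i ∈ Finset.range l₁.length, C ^ i := by
  have hl₂ : ∀ L ∈ l₂, IsLoss L := fun L hL => hl₁ L (hperm.mem_iff.mpr hL)
  have hU₁ := isProbabilityMeasure_foldl hU hl₁ hp
  have hU₂ := isProbabilityMeasure_foldl hU hl₂ hp
  have hpost : IsProbabilityMeasure (p.tilted (-l₁.sum)) := by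
    rw [← foldl_tilted_neg hl₁]
    exact isProbabilityMeasure_foldl
      (fun q L (_ : IsProbabilityMeasure q) hL => hL.isProbabilityMeasure_tilted_neg q) hl₁ hp
  have h₁ := discrepancy_foldl_tilted_neg_le hD.self hU hC hUB hp hl₁
  have h₂ := discrepancy_foldl_tilted_neg_le hD.self hU hC hUB hp hl₂
  rw [← hperm.sum_eq, ← hperm.length_eq, hD.symm _ _ hU₂ hpost] at h₂
  linarith [hD.triangle _ _ _ hU₁ hU₂ hpost]

theorem particleFilter_swap_then_further_updates_general (hD : IsDiscrepancy D)
    (hU : ∀ q L, IsProbabilityMeasure q → IsLoss L → IsProbabilityMeasure (U q L))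
    (hC : 0 ≤ C)
    (hUU : ∀ q r L, IsProbabilityMeasure q → IsProbabilityMeasure r → IsLoss L →
      D (U q L) (U r L) ≤ C * D q r)
    (hUB : ∀ q r L, IsProbabilityMeasure q → IsProbabilityMeasure r → IsLoss L →
      D (U q L) (r.tilted (-L)) ≤ C * D q r + ε)
    (hp : IsProbabilityMeasure p) (hperm : l₁.Perm l₂) (hl₁ : ∀ L ∈ l₁, IsLoss L)
    (hl : ∀ L ∈ l, IsLoss L) :
    D ((l₁ ++ l).foldl U p) ((l₂ ++ l).foldl U p) ≤
      2 * ε * C ^ l.length * ∑ i ∈ Finset.range l₁.length, C ^ i := by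
  have hl₂ : ∀ L ∈ l₂, IsLoss L := fun L hL => hl₁ L (hperm.mem_iff.mpr hL)
  have h_grow : D (l.foldl U (l₁.foldl U p)) (l.foldl U (l₂.foldl U p)) ≤
      C ^ l.length * D (l₁.foldl U p) (l₂.foldl U p) :=
    discrepancy_foldl_le_of_le_mul (s := {q | IsProbabilityMeasure q}) hC
      (fun L hL q hq => hU q L hq (hl L hL)) (fun L hL q hq r hr => hUU q r L hq hr (hl L hL))
      (isProbabilityMeasure_foldl hU hl₁ hp) (isProbabilityMeasure_foldl hU hl₂ hp)
  calc D ((l₁ ++ l).foldl U p) ((l₂ ++ l).foldl U p)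
      ≤ C ^ l.length * D (l₁.foldl U p) (l₂.foldl U p) := by simpa only [List.foldl_append]
    _ ≤ C ^ l.length * (2 * ε * ∑ i ∈ Finset.range l₁.length, C ^ i) := by
        gcongr
        exact discrepancy_foldl_perm_le hD hU hC hUB hp hperm hl₁
    _ = 2 * ε * C ^ l.length * ∑ i ∈ Finset.range l₁.length, C ^ i := by ring

end ParticleFilter

/-- Swapping the first two losses and then applying `k` further particle-filter updates:
`D(p̂[L₁,L₂,L₃,…,L_{2+k}], p̂[L₂,L₁,L₃,…,L_{2+k}]) ≤ 2ε·C^k·(C² − 1)/(C − 1)`. -/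
theorem particleFilter_swap_then_further_updates
    {d : ℕ}
    -- discrepancy measure `D` on the space `Ω` of Borel probability measures on `ℝ^d`
    (D : Measure (EuclideanSpace ℝ (Fin d)) → Measure (EuclideanSpace ℝ (Fin d)) → ℝ)
    (hD_nonneg : ∀ p q, IsProbabilityMeasure p → IsProbabilityMeasure q → 0 ≤ D p q)
    (hD_symm : ∀ p q, IsProbabilityMeasure p → IsProbabilityMeasure q → D p q = D q p)
    (hD_tri : ∀ p q r, IsProbabilityMeasure p → IsProbabilityMeasure q →
      IsProbabilityMeasure r → D p q ≤ D p r + D r q)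
    (hD_refl : ∀ p, IsProbabilityMeasure p → D p p = 0)
    -- particle-filter update `U`, sending `phat ∈ Ω` and a loss `L` to `U phat L ∈ Ω`
    (U : Measure (EuclideanSpace ℝ (Fin d)) → (EuclideanSpace ℝ (Fin d) → ℝ) →
      Measure (EuclideanSpace ℝ (Fin d)))
    (hU_prob : ∀ p L, IsProbabilityMeasure p → Measurable L → (∀ x, 0 ≤ L x) →
      IsProbabilityMeasure (U p L))
    -- constants
    (C ε : ℝ) (hC : 1 < C) (hε : 0 ≤ ε)
    -- assumption (6)
    (h6 : ∀ p q L, IsProbabilityMeasure p → IsProbabilityMeasure q → Measurable L →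
      (∀ x, 0 ≤ L x) → D (U p L) (U q L) ≤ C * D p q)
    -- assumption (7)
    (h7 : ∀ phat p L, IsProbabilityMeasure phat → IsProbabilityMeasure p → Measurable L →
      (∀ x, 0 ≤ L x) → 0 < ∫ x, Real.exp (-(L x)) ∂p →
      D (U phat L) (bayesUpdate p L) ≤ C * D phat p + ε)
    -- a probability measure, two losses, and `k` further losses
    (phat : Measure (EuclideanSpace ℝ (Fin d))) (hphat : IsProbabilityMeasure phat)
    (L₁ L₂ : EuclideanSpace ℝ (Fin d) → ℝ)
    (hmeas₁ : Measurable L₁) (hmeas₂ : Measurable L₂)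
    (hnonneg₁ : ∀ x, 0 ≤ L₁ x) (hnonneg₂ : ∀ x, 0 ≤ L₂ x)
    {k : ℕ} (L' : Fin k → EuclideanSpace ℝ (Fin d) → ℝ)
    (hmeas' : ∀ t, Measurable (L' t)) (hnonneg' : ∀ t x, 0 ≤ L' t x)
    -- the relevant Bayes updates are well defined
    (hwd₁ : ∀ q : Measure (EuclideanSpace ℝ (Fin d)), IsProbabilityMeasure q →
      0 < ∫ x, Real.exp (-(L₁ x)) ∂q)
    (hwd₂ : ∀ q : Measure (EuclideanSpace ℝ (Fin d)), IsProbabilityMeasure q →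
      0 < ∫ x, Real.exp (-(L₂ x)) ∂q)
    (hwd' : ∀ t : Fin k, ∀ q : Measure (EuclideanSpace ℝ (Fin d)), IsProbabilityMeasure q →
      0 < ∫ x, Real.exp (-(L' t x)) ∂q) :
    D (List.foldl U (U (U phat L₁) L₂) (List.ofFn L'))
        (List.foldl U (U (U phat L₂) L₁) (List.ofFn L')) ≤
      2 * ε * C ^ k * (C ^ 2 - 1) / (C - 1) := by
  have h := particleFilter_swap_then_further_updates_general ⟨hD_refl, hD_symm, hD_tri⟩
    (fun q L hq hL => hU_prob q L hq hL.measurable hL.nonneg) (zero_le_one.trans hC.le)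
    (fun q r L hq hr hL => h6 q r L hq hr hL.measurable hL.nonneg)
    (fun q r L hq hr hL => by
      rw [← bayesUpdate_eq_tilted]
      exact h7 q r L hq hr hL.measurable hL.nonneg (integral_exp_pos (hL.integrable_exp_neg r)))
    hphat (.swap L₂ L₁ [])
    (List.forall_mem_cons.mpr ⟨⟨hmeas₁, hnonneg₁⟩,
      List.forall_mem_singleton.mpr ⟨hmeas₂, hnonneg₂⟩⟩)
    (List.forall_mem_ofFn_iff.mpr fun t => ⟨hmeas' t, hnonneg' t⟩)
  rw [List.length_ofFn] at h
  rw [mul_div_assoc, ← geom_sum_eq hC.ne']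
  exact h
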